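/- Let k, Δ, d ≥ 2 and let H be built by the 2-step method from the connected (d,Δ)-bipartite graph H0 using the [Δ,k]-transversal design T. Let Q and Q' be distinct blocks of H0 such that there are λ ≥ 2 pairwise internally-disjoint paths in H0 from Q to Q', each of length at most μ. Then for any block B_{Q,V} ∈ B_Q of H and any block B_{Q',V'} ∈ B_{Q'} of H there are Δ pairwise internally-disjoint paths in H from B_{Q,V} to B_{Q',V'}, each of length at most μ + 4. -/

import Mathlib

/-- The bipartite graph on `ν ⊕ β` (nodes on the left, blocks on the right)
determined by the adjacency relation `adj`. -/
def bipGraph {ν β : Type} (adj : ν → β → Prop) : SimpleGraph (ν ⊕ β) :=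
  SimpleGraph.fromRel fun u v => ∃ x b, u = Sum.inl x ∧ v = Sum.inr b ∧ adj x b

/-- A `[Δ,k]`-transversal design: the nodes form a set of size `Δ * k` partitioned
into `Δ` groups (the fibres of `group`), each of size `k`; there are `k ^ 2` blocks;
every block is adjacent to exactly one node of each group; and every pair of nodes
lying in distinct groups is adjacent to exactly one common block (the block
*generated* by the pair). -/
structure IsTransversalDesign {ν β : Type} (Δ k : ℕ)
    (group : ν → Fin Δ) (adj : ν → β → Prop) : Prop where
  two_le_k : 2 ≤ k
  two_le_Δ : 2 ≤ Δ
  groupCard : ∀ i : Fin Δ, Nat.card {x : ν // group x = i} = k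
  blockCard : Nat.card β = k ^ 2
  blockMeets : ∀ (b : β) (i : Fin Δ), ∃! x : ν, group x = i ∧ adj x b
  pairGen : ∀ x y : ν, group x ≠ group y → ∃! b : β, adj x b ∧ adj y b

/-- A family of walks (with sources `s i` and destinations `t i`) is pairwise
internally-disjoint if every vertex which is a source or destination of some member
of the family appears on members of the family only as their source or destination,
and every vertex which is not a source or destination of any member of the family
lies on at most one member of the family. -/
def PairwiseInternallyDisjoint {V ι : Type} {G : SimpleGraph V} {s t : ι → V}
    (p : (i : ι) → G.Walk (s i) (t i)) : Prop :=
  (∀ i j : ι, ∀ v : V, v ∈ (p i).support → (v = s j ∨ v = t j) → v = s i ∨ v = t i) ∧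
  (∀ i j : ι, ∀ v : V, (∀ l : ι, v ≠ s l ∧ v ≠ t l) →
    v ∈ (p i).support → v ∈ (p j).support → i = j)

/-- A family of walks is pairwise edge-disjoint if every edge lies on at most one
member of the family. -/
def PairwiseEdgeDisjoint {V ι : Type} {G : SimpleGraph V} {s t : ι → V}
    (p : (i : ι) → G.Walk (s i) (t i)) : Prop :=
  ∀ i j : ι, ∀ e : Sym2 V, e ∈ (p i).edges → e ∈ (p j).edges → i = j

/-- A `(d,Δ)`-bipartite graph: every node has degree `d` and every block has
degree (rank) `Δ`. -/
def IsBipartiteDegRank {ν β : Type} (d Δ : ℕ) (adj : ν → β → Prop) : Prop :=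
  (∀ x : ν, Nat.card {b : β // adj x b} = d) ∧
  (∀ b : β, Nat.card {x : ν // adj x b} = Δ)

/-- The bipartite graph determined by `adj` has line-diameter `l`: the maximum,
over pairs of distinct blocks, of the distance between the two blocks is `l`. -/
def HasLineDiam {ν β : Type} (adj : ν → β → Prop) (l : ℕ) : Prop :=
  (∀ b b' : β, b ≠ b' → (bipGraph adj).dist (Sum.inr b) (Sum.inr b') ≤ l) ∧
  (∃ b b' : β, b ≠ b' ∧ (bipGraph adj).dist (Sum.inr b) (Sum.inr b') = l)

/-- `adjH` describes the bipartite graph `H` built by the 2-step method from the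
bipartite graph `H0` (given by `adj0`) and the `[Δ,k]`-transversal design `T`
(given by `groupT`, `adjT`): the nodes of `H` are the pairs `(p, j)` for `p` a node
of `H0` and `j : Fin k` (so the group `G_p` is `{p} × Fin k`), the blocks of `H`
are the pairs `(Q, b)` for `Q` a block of `H0` and `b` a block of `T` (so the set
`B_Q` is `{Q} × βT`, and such sets are automatically pairwise disjoint, as are the
edge sets of the copies `T_Q`), a node `(p, j)` is adjacent in `H` to a block
`(Q, b)` only if `p` is adjacent to `Q` in `H0`, and for every block `Q` of `H0`
the nodes of the groups `G_p`, for `p` a neighbour of `Q` in `H0`, together with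
the blocks of `B_Q` form a copy `T_Q` of `T` whose `Δ` groups are these groups. -/
structure TwoStep {ν0 β0 νT βT : Type} (Δ k : ℕ)
    (adj0 : ν0 → β0 → Prop) (groupT : νT → Fin Δ) (adjT : νT → βT → Prop)
    (adjH : ν0 × Fin k → β0 × βT → Prop) : Prop where
  td : IsTransversalDesign Δ k groupT adjT
  supp : ∀ (x : ν0 × Fin k) (Q : β0) (b : βT), adjH x (Q, b) → adj0 x.1 Q
  copy : ∀ Q : β0, ∃ (enum : Fin Δ → ν0) (f : νT ≃ {x : ν0 × Fin k // adj0 x.1 Q})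
      (g : βT ≃ βT),
    Function.Injective enum ∧ (∀ i : Fin Δ, adj0 (enum i) Q) ∧
    (∀ q : ν0, adj0 q Q → ∃ i : Fin Δ, enum i = q) ∧
    (∀ x : νT, ((f x : ν0 × Fin k).1 = enum (groupT x))) ∧
    (∀ (x : νT) (b : βT), adjT x b ↔ adjH (f x : ν0 × Fin k) (Q, g b))

theorem bipGraph_adj_inl_inr {ν β : Type} {adj : ν → β → Prop} {x : ν} {b : β} :
    (bipGraph adj).Adj (Sum.inl x) (Sum.inr b) ↔ adj x b := by
  simp [bipGraph]

theorem bipGraph_adj_inr_inl {ν β : Type} {adj : ν → β → Prop} {x : ν} {b : β} :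
    (bipGraph adj).Adj (Sum.inr b) (Sum.inl x) ↔ adj x b := by
  simp [bipGraph]

theorem not_bipGraph_adj_inl_inl {ν β : Type} {adj : ν → β → Prop} {x y : ν} :
    ¬ (bipGraph adj).Adj (Sum.inl x) (Sum.inl y) := by
  simp [bipGraph]

theorem not_bipGraph_adj_inr_inr {ν β : Type} {adj : ν → β → Prop} {b c : β} :
    ¬ (bipGraph adj).Adj (Sum.inr b) (Sum.inr c) := by
  simp [bipGraph]

/-- The incidence properties of `H` over `H0` inherited from the transversal design. -/
structure IsTransversalLift {ν0 β0 βT : Type} {k : ℕ} (adj0 : ν0 → β0 → Prop)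
    (adjH : ν0 × Fin k → β0 × βT → Prop) : Prop where
  supp : ∀ {p j Q b}, adjH (p, j) (Q, b) → adj0 p Q
  exists_label : ∀ {p Q} (b), adj0 p Q → ∃ j, adjH (p, j) (Q, b)
  label_unique : ∀ {p j j' Q b}, adjH (p, j) (Q, b) → adjH (p, j') (Q, b) → j = j'
  exists_block : ∀ {p p' Q} (j j'), adj0 p Q → adj0 p' Q → p ≠ p' →
    ∃ b, adjH (p, j) (Q, b) ∧ adjH (p', j') (Q, b)
  block_unique : ∀ {p p' j j' Q b b'}, p ≠ p' → adjH (p, j) (Q, b) → adjH (p', j') (Q, b) →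
    adjH (p, j) (Q, b') → adjH (p', j') (Q, b') → b = b'

theorem TwoStep.isTransversalLift {ν0 β0 νT βT : Type} {Δ k : ℕ}
    {adj0 : ν0 → β0 → Prop} {groupT : νT → Fin Δ} {adjT : νT → βT → Prop}
    {adjH : ν0 × Fin k → β0 × βT → Prop} (h : TwoStep Δ k adj0 groupT adjT adjH) :
    IsTransversalLift adj0 adjH where
  supp {p j Q b} hb := h.supp (p, j) Q b hb
  exists_label {p Q} b hp := by
    obtain ⟨enum, f, g, -, -, hsurj, hf, hfg⟩ := h.copy Q
    obtain ⟨i, rfl⟩ := hsurj p hp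
    obtain ⟨x, ⟨hx, hxb⟩, -⟩ := h.td.blockMeets (g.symm b) i
    refine ⟨(f x : ν0 × Fin k).2, ?_⟩
    rw [hfg, g.apply_symm_apply] at hxb
    rwa [← hx, ← hf]
  label_unique {p j j' Q b} h1 h2 := by
    obtain ⟨enum, f, g, hinj, -, -, hf, hfg⟩ := h.copy Q
    obtain ⟨x, hx⟩ := f.surjective ⟨(p, j), h.supp _ _ _ h1⟩
    obtain ⟨x', hx'⟩ := f.surjective ⟨(p, j'), h.supp _ _ _ h2⟩
    have e1 := hf x
    have e2 := hf x'
    rw [hx] at e1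
    rw [hx'] at e2
    have e3 : groupT x = groupT x' := hinj (e1.symm.trans e2)
    have a1 : adjT x (g.symm b) := by rw [hfg, hx, g.apply_symm_apply]; exact h1
    have a2 : adjT x' (g.symm b) := by rw [hfg, hx', g.apply_symm_apply]; exact h2
    have := (h.td.blockMeets (g.symm b) (groupT x)).unique ⟨rfl, a1⟩ ⟨e3.symm, a2⟩
    subst this
    rw [hx] at hx'
    simpa using hx'
  exists_block {p p' Q} j j' hp hp' hne := by
    obtain ⟨enum, f, g, -, -, -, hf, hfg⟩ := h.copy Q
    obtain ⟨x, hx⟩ := f.surjective ⟨(p, j), hp⟩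
    obtain ⟨x', hx'⟩ := f.surjective ⟨(p', j'), hp'⟩
    have e1 := hf x
    have e2 := hf x'
    rw [hx] at e1
    rw [hx'] at e2
    obtain ⟨b, ⟨hb, hb'⟩, -⟩ := h.td.pairGen x x' fun e => hne (by
      simpa using e1.trans ((congrArg enum e).trans e2.symm))
    rw [hfg, hx] at hb
    rw [hfg, hx'] at hb'
    exact ⟨g b, hb, hb'⟩
  block_unique {p p' j j' Q b b'} hne h1 h2 h3 h4 := by
    obtain ⟨enum, f, g, -, -, -, hf, hfg⟩ := h.copy Q
    obtain ⟨x, hx⟩ := f.surjective ⟨(p, j), h.supp _ _ _ h1⟩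
    obtain ⟨x', hx'⟩ := f.surjective ⟨(p', j'), h.supp _ _ _ h2⟩
    have e1 := hf x
    have e2 := hf x'
    rw [hx] at e1
    rw [hx'] at e2
    have := (h.td.pairGen x x' fun e => hne (by
      simpa using e1.trans ((congrArg enum e).trans e2.symm))).unique
      (y₁ := g.symm b) (y₂ := g.symm b')
      ⟨by rw [hfg, hx, g.apply_symm_apply]; exact h1, by rw [hfg, hx', g.apply_symm_apply]; exact h2⟩
      ⟨by rw [hfg, hx, g.apply_symm_apply]; exact h3, by rw [hfg, hx', g.apply_symm_apply]; exact h4⟩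
    exact g.symm.injective this

/-- A block is incident with at most `k + 1` groups. -/
theorem IsTransversalLift.card_le {ν0 β0 βT : Type} {k : ℕ} {adj0 : ν0 → β0 → Prop}
    {adjH : ν0 × Fin k → β0 × βT → Prop} (hT : IsTransversalLift adj0 adjH) (hk : 2 ≤ k)
    {Q : β0} (V : βT) {N : Finset ν0} (hN : ∀ p, p ∈ N ↔ adj0 p Q) : N.card ≤ k + 1 := by
  classical
  rcases Nat.lt_or_ge 1 N.card with h1 | h1
  swap
  · omega
  obtain ⟨a, ha, b, hb, hab⟩ := Finset.one_lt_card.mp h1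
  obtain ⟨x, hx⟩ := hT.exists_label V ((hN a).1 ha)
  have : Nontrivial (Fin k) := Fin.nontrivial_iff_two_le.2 hk
  obtain ⟨z, hz⟩ := exists_ne x
  have key : ∀ p ∈ N.erase a, ∃ l : Fin k, ∃ B y, adjH (p, y) (Q, V) ∧ adjH (p, y) (Q, B) ∧
      adjH (a, z) (Q, B) ∧ adjH (b, l) (Q, B) := by
    intro p hp
    have hp' := Finset.mem_erase.1 hp
    obtain ⟨y, hy⟩ := hT.exists_label V ((hN p).1 hp'.2)
    obtain ⟨B, hB, hB'⟩ := hT.exists_block y z ((hN p).1 hp'.2) ((hN a).1 ha) hp'.1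
    obtain ⟨l, hl⟩ := hT.exists_label B ((hN b).1 hb)
    exact ⟨l, B, y, hy, hB, hB', hl⟩
  choose! l hl using key
  have hinj : Set.InjOn l (N.erase a : Finset ν0) := by
    intro p hp p' hp' e
    obtain ⟨B, y, h1, h2, h3, h4⟩ := hl p hp
    obtain ⟨B', y', h1', h2', h3', h4'⟩ := hl p' hp'
    rw [e] at h4
    obtain rfl := hT.block_unique hab h3 h4 h3' h4'
    by_contra hne
    obtain rfl := hT.block_unique hne h1 h1' h2 h2'
    exact hz (hT.label_unique h3 hx)
  have := Finset.card_le_card_of_injOn l (t := Finset.univ) (fun _ _ => Finset.mem_univ _) hinj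
  rw [Finset.card_erase_of_mem ha, Finset.card_univ, Fintype.card_fin] at this
  omega

theorem Finset.exists_mapsTo_injOn {α γ : Type*} [Nonempty γ] {s : Finset α} {t : Finset γ}
    (h : s.card ≤ t.card) : ∃ f : α → γ, (∀ x ∈ s, f x ∈ t) ∧ Set.InjOn f s := by
  classical
  obtain ⟨e⟩ := Function.Embedding.nonempty_of_card_le (α := s) (β := t) (by simpa using h)
  refine ⟨fun x => if hx : x ∈ s then e ⟨x, hx⟩ else Classical.arbitrary γ, ?_, ?_⟩
  · intro x hx
    simp [hx]
  · intro x hx y hy hxy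
    have hx : x ∈ s := hx
    have hy : y ∈ s := hy
    simpa [hx, hy, ← Subtype.ext_iff] using hxy

/-- The projection from the vertices of `H` to those of `H0`. -/
def projVertex {ν0 β0 βT : Type} {k : ℕ} : (ν0 × Fin k) ⊕ (β0 × βT) → ν0 ⊕ β0 :=
  Sum.map Prod.fst Prod.fst

/-- A path of `H0` between distinct nodes lifts to disjoint walks of `H` with prescribed ends. -/
theorem IsTransversalLift.exists_lanes {ν0 β0 βT ι : Type} {k : ℕ} {adj0 : ν0 → β0 → Prop}
    {adjH : ν0 × Fin k → β0 × βT → Prop} (hT : IsTransversalLift adj0 adjH) {s : Set ι}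
    {f g : ι → Fin k} (hf : Set.InjOn f s) (hg : Set.InjOn g s) {u v : ν0}
    (p : (bipGraph adj0).Walk (Sum.inl u) (Sum.inl v)) (hp : p.IsPath) (huv : u ≠ v) :
    ∃ M : ∀ i, (bipGraph adjH).Walk (Sum.inl (u, f i)) (Sum.inl (v, g i)),
      (∀ i, (M i).length ≤ p.length) ∧
      (∀ i, ∀ z ∈ (M i).support, projVertex z ∈ p.support) ∧
      (∀ i ∈ s, ∀ j ∈ s, ∀ z ∈ (M i).support, z ∈ (M j).support → i = j) ∧
      (∀ i l, Sum.inl (u, l) ∈ (M i).support → l = f i) ∧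
      (∀ i l, Sum.inl (v, l) ∈ (M i).support → l = g i) := by
  match p, hp with
  | .nil, _ => exact absurd rfl huv
  | .cons (v := .inl _) h _, _ => exact absurd h not_bipGraph_adj_inl_inl
  | .cons (v := .inr _) _ (.cons (v := .inr _) h _), _ => exact absurd h not_bipGraph_adj_inr_inr
  | .cons (v := .inr e) h (.cons (v := .inl w) h' p), hp =>
    have hu := bipGraph_adj_inl_inr.1 h
    have hw := bipGraph_adj_inr_inl.1 h'
    simp only [SimpleGraph.Walk.cons_isPath_iff, SimpleGraph.Walk.support_cons,
      List.mem_cons, not_or] at hp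
    obtain ⟨⟨hp, he⟩, -, hup⟩ := hp
    have huw : u ≠ w := fun hh => hup (hh ▸ p.start_mem_support)
    by_cases hwv : w = v
    · subst hwv
      choose B hB hB' using fun i => hT.exists_block (f i) (g i) hu hw huw
      refine ⟨fun i => .cons (bipGraph_adj_inl_inr.2 (hB i))
        (.cons (bipGraph_adj_inr_inl.2 (hB' i)) .nil), ?_, ?_, ?_, ?_, ?_⟩
      · intro i
        simp
      · intro i z hz
        simp only [SimpleGraph.Walk.support_cons, SimpleGraph.Walk.support_nil,
          List.mem_cons, List.not_mem_nil, or_false] at hz ⊢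
        rcases hz with rfl | rfl | rfl <;> simp [projVertex]
      · intro i hi j hj z hz hz'
        simp only [SimpleGraph.Walk.support_cons, SimpleGraph.Walk.support_nil,
          List.mem_cons, List.not_mem_nil, or_false] at hz hz'
        rcases hz with rfl | rfl | rfl
        · exact hf hi hj (by simpa [huw] using hz')
        · have := hB j
          rw [← show B i = B j by simpa using hz'] at this
          exact hf hi hj (hT.label_unique (hB i) this)
        · exact hg hi hj (by simpa [huw.symm] using hz')
      · intro i l hz
        simpa [huw] using hz
      · intro i l hz
        simpa [huw.symm] using hz
    · obtain ⟨M, hlen, hproj, hdis, hst, hen⟩ := hT.exists_lanes hf hg p hp hwv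
      choose B hB hB' using fun i => hT.exists_block (f i) (f i) hu hw huw
      have hnu : ∀ i l, Sum.inl (u, l) ∉ (M i).support := fun i l hh => hup (hproj i _ hh)
      have hne : ∀ i b, Sum.inr (e, b) ∉ (M i).support := fun i b hh => he (hproj i _ hh)
      refine ⟨fun i => .cons (bipGraph_adj_inl_inr.2 (hB i))
        (.cons (bipGraph_adj_inr_inl.2 (hB' i)) (M i)), ?_, ?_, ?_, ?_, ?_⟩
      · intro i
        simpa using hlen i
      · intro i z hz
        simp only [SimpleGraph.Walk.support_cons, List.mem_cons] at hz ⊢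
        rcases hz with rfl | rfl | hz
        · simp [projVertex]
        · simp [projVertex]
        · exact .inr (.inr (hproj i z hz))
      · intro i hi j hj z hz hz'
        simp only [SimpleGraph.Walk.support_cons, List.mem_cons] at hz hz'
        rcases hz with rfl | rfl | hz
        · exact hf hi hj (by simpa [hnu] using hz')
        · have := hB j
          rw [← show B i = B j by simpa [hne] using hz'] at this
          exact hf hi hj (hT.label_unique (hB i) this)
        · rcases hz' with rfl | rfl | hz'
          · exact absurd hz (hnu i _)
          · exact absurd hz (hne i _)
          · exact hdis i hi j hj z hz hz'
      · intro i l hz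
        simpa [hnu] using hz
      · intro i l hz
        have hvu : v ≠ u := huv.symm
        exact hen i l (by simpa [hvu] using hz)
  termination_by p.length

theorem SimpleGraph.Walk.exists_tail_of_block {ν β : Type} {adj : ν → β → Prop} {Q : β}
    {x : ν ⊕ β} (q : (bipGraph adj).Walk (Sum.inr Q) x) (hq : q.IsPath) (hx : x ≠ Sum.inr Q) :
    ∃ u, adj u Q ∧ ∃ r : (bipGraph adj).Walk (Sum.inl u) x, r.IsPath ∧ r.length + 1 = q.length ∧
      Sum.inr Q ∉ r.support ∧ r.support ⊆ q.support := by
  match q, hq with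
  | .nil, _ => exact absurd rfl hx
  | .cons (v := .inr _) h _, _ => exact absurd h not_bipGraph_adj_inr_inr
  | .cons (v := .inl u) h r, hq =>
    rw [SimpleGraph.Walk.cons_isPath_iff] at hq
    exact ⟨u, bipGraph_adj_inr_inl.1 h, r, hq.1, by simp, hq.2, by simp⟩

/-- A path between two blocks can be shortened so that only its first node is adjacent to the
first block and only its last node is adjacent to the last block. -/
theorem exists_induced_node_path {ν β : Type} {adj : ν → β → Prop} {Q Q' : β} (hQ : Q ≠ Q')
    (q : (bipGraph adj).Walk (Sum.inr Q) (Sum.inr Q')) (hq : q.IsPath) :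
    ∃ (u v : ν) (p : (bipGraph adj).Walk (Sum.inl u) (Sum.inl v)), p.IsPath ∧
      p.length + 2 ≤ q.length ∧ adj u Q ∧ adj v Q' ∧
      (∀ z ∈ p.support, z ∈ q.support ∧ z ≠ Sum.inr Q ∧ z ≠ Sum.inr Q') ∧
      (∀ w, Sum.inl w ∈ p.support → adj w Q → w = u) ∧
      (∀ w, Sum.inl w ∈ p.support → adj w Q' → w = v) := by
  classical
  let good : ℕ → Prop := fun n => ∃ (u v : ν) (p : (bipGraph adj).Walk (Sum.inl u) (Sum.inl v)),
    p.length = n ∧ p.length + 2 ≤ q.length ∧ adj u Q ∧ adj v Q' ∧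
      (∀ z ∈ p.support, z ∈ q.support ∧ z ≠ Sum.inr Q ∧ z ≠ Sum.inr Q')
  have hgood : ∃ n, good n := by
    obtain ⟨u, hu, r, hr, hlen, hQr, hrs⟩ := q.exists_tail_of_block hq (by simpa using hQ.symm)
    obtain ⟨v, hv, t, -, hlen', hQt, hts⟩ := r.reverse.exists_tail_of_block hr.reverse (by simp)
    rw [SimpleGraph.Walk.length_reverse] at hlen'
    refine ⟨_, u, v, t.reverse, rfl, ?_, hu, hv, ?_⟩
    · rw [SimpleGraph.Walk.length_reverse]
      omega
    · intro z hz
      have hz : z ∈ t.support := by simpa using hz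
      have hz' : z ∈ r.support := by simpa using hts hz
      exact ⟨hrs hz', fun e => hQr (e ▸ hz'), fun e => hQt (e ▸ hz)⟩
  obtain ⟨u, v, p, hpn, hpl, hu, hv, hps⟩ := Nat.find_spec hgood
  have hmin : ∀ (u v : ν) (p' : (bipGraph adj).Walk (Sum.inl u) (Sum.inl v)), adj u Q → adj v Q' →
      p'.support ⊆ p.support → p.length ≤ p'.length := by
    intro u' v' p' hu' hv' hs
    by_contra hlt
    exact Nat.find_min hgood (m := p'.length) (by omega)
      ⟨u', v', p', rfl, by omega, hu', hv', fun z hz => hps z (hs hz)⟩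
  refine ⟨u, v, p.bypass, p.bypass_isPath, (Nat.add_le_add_right p.length_bypass_le_length _).trans hpl,
    hu, hv, fun z hz => hps z (p.support_bypass_subset_support hz), ?_, ?_⟩
  · intro w hw hwQ
    have hw' := p.support_bypass_subset_support hw
    have h1 := hmin w v (p.dropUntil _ hw') hwQ hv (p.support_dropUntil_subset_support hw')
    have h2 := congrArg SimpleGraph.Walk.length (p.take_spec hw')
    rw [SimpleGraph.Walk.length_append] at h2
    have h3 := SimpleGraph.Walk.eq_of_length_eq_zero (p := p.takeUntil _ hw') (by omega)
    simpa using h3.symm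
  · intro w hw hwQ
    have hw' := p.support_bypass_subset_support hw
    have h1 := hmin u w (p.takeUntil _ hw') hu hwQ (p.support_takeUntil_subset_support hw')
    have h2 := congrArg SimpleGraph.Walk.length (p.take_spec hw')
    rw [SimpleGraph.Walk.length_append] at h2
    have h3 := SimpleGraph.Walk.eq_of_length_eq_zero (p := p.dropUntil _ hw') (by omega)
    simpa using h3

/-- The node `n` equals the node `(p, X p)` or is joined to it by a block of `B_Q` different from
the block whose node in each group `G_p`, for `p ∈ N`, is `(p, X p)`. -/
def OneHop {ν0 : Type} {k : ℕ} (N : Finset ν0) (X : ν0 → Fin k) (p : ν0) (n : ν0 × Fin k) : Prop :=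
  n = (p, X p) ∨ (n.1 ∈ N ∧ n.1 ≠ p ∧ n.2 ≠ X n.1)

theorem IsTransversalLift.exists_walk_of_oneHop {ν0 β0 βT : Type} {k : ℕ} {adj0 : ν0 → β0 → Prop}
    {adjH : ν0 × Fin k → β0 × βT → Prop} (hT : IsTransversalLift adj0 adjH) {Q : β0} {V : βT}
    {N : Finset ν0} (hN : ∀ p, p ∈ N ↔ adj0 p Q) {X : ν0 → Fin k}
    (hX : ∀ p ∈ N, adjH (p, X p) (Q, V)) {p : ν0} (hp : p ∈ N) {n : ν0 × Fin k}
    (hn : OneHop N X p n) :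
    ∃ W : (bipGraph adjH).Walk (Sum.inr (Q, V)) (Sum.inl n), W.length ≤ 3 ∧
      ∀ z ∈ W.support, z = Sum.inr (Q, V) ∨ z = Sum.inl (p, X p) ∨ z = Sum.inl n ∨
        ∃ B, B ≠ V ∧ z = Sum.inr (Q, B) ∧ adjH (p, X p) (Q, B) := by
  rcases hn with rfl | ⟨h1, h2, h3⟩
  · refine ⟨.cons (bipGraph_adj_inr_inl.2 (hX p hp)) .nil, by simp, ?_⟩
    intro z hz
    simp at hz
    tauto
  · obtain ⟨B, hB, hB'⟩ := hT.exists_block (X p) n.2 ((hN p).1 hp) ((hN _).1 h1) h2.symm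
    refine ⟨.cons (bipGraph_adj_inr_inl.2 (hX p hp)) (.cons (bipGraph_adj_inl_inr.2 hB)
      (.cons (bipGraph_adj_inr_inl.2 hB') .nil)), by simp, ?_⟩
    intro z hz
    simp only [SimpleGraph.Walk.support_cons, SimpleGraph.Walk.support_nil,
          List.mem_cons, List.not_mem_nil, or_false] at hz
    rcases hz with rfl | rfl | rfl | rfl
    · exact .inl rfl
    · exact .inr (.inl rfl)
    · refine .inr (.inr (.inr ⟨B, ?_, rfl, hB⟩))
      rintro rfl
      exact h3 (hT.label_unique hB' (hX _ h1))
    · exact .inr (.inr (.inl rfl))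

/-- Disjoint walks in the middle, linked to the neighbours of the two blocks by at most one hop on
each side, give internally-disjoint paths between the two blocks. -/
theorem IsTransversalLift.exists_paths {ν0 β0 βT : Type} {k : ℕ} {adj0 : ν0 → β0 → Prop}
    {adjH : ν0 × Fin k → β0 × βT → Prop} (hT : IsTransversalLift adj0 adjH) {Q Q' : β0}
    (hQQ : Q ≠ Q') {V V' : βT} {N N' : Finset ν0} (hN : ∀ p, p ∈ N ↔ adj0 p Q)
    (hN' : ∀ p, p ∈ N' ↔ adj0 p Q') {X Y : ν0 → Fin k} (hX : ∀ p ∈ N, adjH (p, X p) (Q, V))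
    (hY : ∀ p ∈ N', adjH (p, Y p) (Q', V')) {τ : ν0 → ν0} (hτ : ∀ p ∈ N, τ p ∈ N')
    (hτi : Set.InjOn τ N) (S : ν0 → Set ((ν0 × Fin k) ⊕ (β0 × βT))) {L : ℕ}
    (hM : ∀ p ∈ N, ∃ (n n' : ν0 × Fin k) (M : (bipGraph adjH).Walk (Sum.inl n) (Sum.inl n')),
      M.length ≤ L ∧ OneHop N X p n ∧ OneHop N' Y (τ p) n' ∧ ∀ z ∈ M.support, z ∈ S p)
    (hS : ∀ p ∈ N, ∀ r ∈ N, ∀ z ∈ S p, z ∈ S r → p = r)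
    (hSX : ∀ p ∈ N, ∀ r ∈ N, Sum.inl (p, X p) ∈ S r → p = r)
    (hSY : ∀ p ∈ N, ∀ r ∈ N, Sum.inl (τ p, Y (τ p)) ∈ S r → p = r)
    (hXY : ∀ p ∈ N, ∀ r ∈ N, p = τ r → X p = Y p → p = r)
    (hSQ : ∀ p ∈ N, ∀ B, Sum.inr (Q, B) ∉ S p ∧ Sum.inr (Q', B) ∉ S p)
    {Δ : ℕ} (hΔ : N.card = Δ) :
    ∃ P : Fin Δ → (bipGraph adjH).Walk (Sum.inr (Q, V)) (Sum.inr (Q', V')),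
      (∀ i, (P i).IsPath ∧ (P i).length ≤ L + 6) ∧ PairwiseInternallyDisjoint P := by
  classical
  have hW : ∀ p : N, ∃ W : (bipGraph adjH).Walk (Sum.inr (Q, V)) (Sum.inr (Q', V')),
      W.length ≤ L + 6 ∧ ∀ z ∈ W.support, z ≠ Sum.inr (Q, V) → z ≠ Sum.inr (Q', V') →
        z ∈ S p ∨ z = Sum.inl (p.1, X p) ∨ z = Sum.inl (τ p, Y (τ p)) ∨
        (∃ B, B ≠ V ∧ z = Sum.inr (Q, B) ∧ adjH (p.1, X p) (Q, B)) ∨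
        (∃ B, B ≠ V' ∧ z = Sum.inr (Q', B) ∧ adjH (τ p, Y (τ p)) (Q', B)) := by
    rintro ⟨p, hp⟩
    obtain ⟨n, n', M, hML, hn, hn', hMS⟩ := hM p hp
    obtain ⟨W1, hl1, hs1⟩ := hT.exists_walk_of_oneHop hN hX hp hn
    obtain ⟨W2, hl2, hs2⟩ := hT.exists_walk_of_oneHop hN' hY (hτ p hp) hn'
    refine ⟨W1.append (M.append W2.reverse), ?_, ?_⟩
    · simp only [SimpleGraph.Walk.length_append, SimpleGraph.Walk.length_reverse]
      omega
    · intro z hz h1 h2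
      have hnS := hMS _ M.start_mem_support
      have hnS' := hMS _ M.end_mem_support
      simp only [SimpleGraph.Walk.mem_support_append_iff, SimpleGraph.Walk.support_reverse,
        List.mem_reverse] at hz
      rcases hz with hz | hz | hz
      · rcases hs1 z hz with h | h | h | h
        · exact absurd h h1
        · exact .inr (.inl h)
        · exact .inl (h ▸ hnS)
        · exact .inr (.inr (.inr (.inl h)))
      · exact .inl (hMS z hz)
      · rcases hs2 z hz with h | h | h | h
        · exact absurd h h2
        · exact .inr (.inr (.inl h))
        · exact .inl (h ▸ hnS')
        · exact .inr (.inr (.inr (.inr h)))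
  choose W hWl hWs using hW
  let e : Fin Δ ≃ N := (N.equivFinOfCardEq hΔ).symm
  refine ⟨fun i => (W (e i)).bypass, fun i => ⟨(W (e i)).bypass_isPath,
    (W (e i)).length_bypass_le_length.trans (hWl _)⟩, ?_, ?_⟩
  · intro i j v _ h
    exact h
  · intro i j z hz hi hj
    obtain ⟨hz1, hz2⟩ := hz i
    apply e.injective
    have hi := hWs _ z ((W (e i)).support_bypass_subset_support hi) hz1 hz2
    have hj := hWs _ z ((W (e j)).support_bypass_subset_support hj) hz1 hz2
    revert hi hj
    generalize e i = p
    generalize e j = r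
    obtain ⟨p, hp⟩ := p
    obtain ⟨r, hr⟩ := r
    rw [Subtype.mk_eq_mk]
    dsimp only
    intro hi hj
    rcases hi with hi | rfl | rfl | ⟨B, hB, rfl, hpB⟩ | ⟨B, hB, rfl, hpB⟩
    · rcases hj with hj | rfl | rfl | ⟨B, hB, rfl, hrB⟩ | ⟨B, hB, rfl, hrB⟩
      · exact hS p hp r hr z hi hj
      · exact (hSX r hr p hp hi).symm
      · exact (hSY r hr p hp hi).symm
      · exact absurd hi (hSQ p hp B).1
      · exact absurd hi (hSQ p hp B).2
    · rcases hj with hj | hj | hj | ⟨C, hC, hj, hrC⟩ | ⟨C, hC, hj, hrC⟩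
      · exact hSX p hp r hr hj
      · exact (Prod.mk.inj (Sum.inl.inj hj)).1
      · simp only [Sum.inl.injEq, Prod.mk.injEq] at hj
        exact hXY p hp r hr hj.1 (hj.1.symm ▸ hj.2)
      all_goals simp at hj
    · rcases hj with hj | hj | hj | ⟨C, hC, hj, hrC⟩ | ⟨C, hC, hj, hrC⟩
      · exact hSY p hp r hr hj
      · simp only [Sum.inl.injEq, Prod.mk.injEq] at hj
        exact (hXY r hr p hp hj.1.symm (hj.1 ▸ hj.2.symm)).symm
      · simp only [Sum.inl.injEq, Prod.mk.injEq] at hj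
        exact hτi hp hr hj.1
      all_goals simp at hj
    · rcases hj with hj | hj | hj | ⟨C, hC, hj, hrC⟩ | ⟨C, hC, hj, hrC⟩
      · exact absurd hj (hSQ r hr B).1
      · simp at hj
      · simp at hj
      · obtain rfl : B = C := by simpa using hj
        by_contra hne
        exact hB (hT.block_unique hne hpB hrC (hX p hp) (hX r hr))
      · exact absurd (by simpa using hj) (fun h : Q = Q' ∧ _ => hQQ h.1)
    · rcases hj with hj | hj | hj | ⟨C, hC, hj, hrC⟩ | ⟨C, hC, hj, hrC⟩
      · exact absurd hj (hSQ r hr B).2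
      · simp at hj
      · simp at hj
      · exact absurd (by simpa using hj) (fun h : Q' = Q ∧ _ => hQQ h.1.symm)
      · obtain rfl : B = C := by simpa using hj
        by_contra hne
        exact hB (hT.block_unique (fun h => hne (hτi hp hr h)) hpB hrC
          (hY _ (hτ p hp)) (hY _ (hτ r hr)))

theorem Fin.le_card_compl_pair {k : ℕ} {n : ℕ} (x y : Fin k) (h : n + 2 ≤ k) :
    n ≤ ({x, y}ᶜ : Finset (Fin k)).card := by
  rw [Finset.card_compl, Fintype.card_fin]
  have := Finset.card_le_two (a := x) (b := y)
  omega

set_option maxHeartbeats 2000000 in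
/-- If two blocks have two common neighbours `a` and `b`, then the source nodes `(p, X p)` and
target nodes `(p, Y p)` can be matched through distinct nodes of the groups of `a` and `b`. -/
theorem exists_midpoints {ν0 : Type} {k : ℕ} (hk : 2 ≤ k) {N N' : Finset ν0} {X Y : ν0 → Fin k}
    (hc : N.card = N'.card) (hN : N.card ≤ k + 1) {a b : ν0} (haN : a ∈ N) (haN' : a ∈ N')
    (hbN : b ∈ N) (hbN' : b ∈ N') (hab : a ≠ b) (h : X b = Y b → X a = Y a) :
    ∃ (τ : ν0 → ν0) (m : ν0 → ν0 × Fin k), (∀ p ∈ N, τ p ∈ N') ∧ Set.InjOn τ N ∧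
      Set.InjOn m N ∧ (∀ p ∈ N, ∀ r ∈ N, m r = (p, X p) → p = r) ∧
      (∀ p ∈ N, ∀ r ∈ N, m r = (τ p, Y (τ p)) → p = r) ∧
      (∀ p ∈ N, ∀ r ∈ N, p = τ r → X p = Y p → p = r) ∧
      ∀ p ∈ N, OneHop N X p (m p) ∧ OneHop N' Y (τ p) (m p) := by
  classical
  have : Nonempty ν0 := ⟨a⟩
  have : Nontrivial (Fin k) := Fin.nontrivial_iff_two_le.2 hk
  let E := insert a (insert b ((N ∩ N').filter fun p => X p = Y p))
  have hEN : E ⊆ N := by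
    intro p
    simp only [E, Finset.mem_insert, Finset.mem_filter, Finset.mem_inter]
    rintro (rfl | rfl | h) <;> tauto
  have hEN' : E ⊆ N' := by
    intro p
    simp only [E, Finset.mem_insert, Finset.mem_filter, Finset.mem_inter]
    rintro (rfl | rfl | h) <;> tauto
  have hEab : ({a, b} : Finset ν0) ⊆ E := by
    intro p
    simp only [E, Finset.mem_insert, Finset.mem_singleton]
    tauto
  have hE2 : 2 ≤ E.card := by
    rw [← Finset.card_pair hab]
    exact Finset.card_le_card hEab
  have hEi : ∀ p, p ∈ E ↔ p = a ∨ p = b ∨ (p ∈ N ∧ p ∈ N' ∧ X p = Y p) := by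
    simp [E, and_assoc]
  have hD : (N \ E).card + E.card = N.card := Finset.card_sdiff_add_card_eq_card hEN
  have hD' : (N' \ E).card + E.card = N'.card := Finset.card_sdiff_add_card_eq_card hEN'
  clear_value E
  by_cases hb : X b = Y b
  · have ha := h hb
    obtain ⟨σ, hσ, hσi⟩ := Finset.exists_mapsTo_injOn (s := N \ E) (t := N' \ E) (by omega)
    obtain ⟨f, hf, hfi⟩ := Finset.exists_mapsTo_injOn (s := N \ E)
      (t := ({X a}ᶜ : Finset (Fin k))) (by
        rw [Finset.card_compl, Fintype.card_fin, Finset.card_singleton]; omega)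
    refine ⟨fun p => if p ∈ E then p else σ p, fun p => if p ∈ E then (p, X p) else (a, f p),
      ?_, ?_, ?_, ?_, ?_, ?_, ?_⟩
    all_goals simp only [Set.InjOn, OneHop, Finset.mem_coe, Finset.mem_sdiff,
      Finset.mem_compl, Finset.mem_singleton] at *
    all_goals grind
  · rcases Finset.eq_empty_or_nonempty (N \ E) with hDe | ⟨c, hcD⟩
    · rw [Finset.sdiff_eq_empty_iff_subset] at hDe
      by_cases ha : X a = Y a
      · obtain ⟨z, hz⟩ := exists_ne (X a)
        refine ⟨id, fun p => if p = b then (a, z) else (p, X p), ?_, ?_, ?_, ?_, ?_, ?_, ?_⟩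
        all_goals simp only [Set.InjOn, OneHop, Finset.mem_coe, id] at *
        all_goals grind
      · refine ⟨fun p => if p = a then b else if p = b then a else p, fun p => (p, X p),
          ?_, ?_, ?_, ?_, ?_, ?_, ?_⟩
        all_goals simp only [Set.InjOn, OneHop, Finset.mem_coe] at *
        all_goals grind
    · have hpos : 0 < (N' \ E).card := by
        have := Finset.card_pos.2 ⟨c, hcD⟩
        omega
      obtain ⟨c', hcD'⟩ := Finset.card_pos.1 hpos
      have h1 := Finset.card_erase_add_one hcD
      have h2 := Finset.card_erase_add_one hcD'
      obtain ⟨σ, hσ, hσi⟩ := Finset.exists_mapsTo_injOn (s := (N \ E).erase c)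
        (t := (N' \ E).erase c') (by omega)
      have : Nonempty (Fin k) := ⟨X a⟩
      obtain ⟨f, hf, hfi⟩ := Finset.exists_mapsTo_injOn (s := (N \ E).erase c)
        (t := ({X a, Y a}ᶜ : Finset (Fin k)))
        (Fin.le_card_compl_pair _ _ (by omega))
      by_cases ha : X a = Y a
      · refine ⟨fun p => if p = b then c' else if p = c then b else if p ∈ E then p else σ p,
          fun p => if p = c then (b, Y b) else if p ∈ E then (p, X p) else (a, f p),
          ?_, ?_, ?_, ?_, ?_, ?_, ?_⟩
        all_goals simp only [Set.InjOn, OneHop, Finset.mem_coe, Finset.mem_sdiff, Finset.mem_erase,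
          Finset.mem_compl, Finset.mem_insert, Finset.mem_singleton] at *
        all_goals grind
      · refine ⟨fun p => if p = a then b else if p = b then c' else if p = c then a
            else if p ∈ E then p else σ p,
          fun p => if p = c then (a, Y a) else if p ∈ E then (p, X p) else (a, f p),
          ?_, ?_, ?_, ?_, ?_, ?_, ?_⟩
        all_goals simp only [Set.InjOn, OneHop, Finset.mem_coe, Finset.mem_sdiff, Finset.mem_erase,
          Finset.mem_compl, Finset.mem_insert, Finset.mem_singleton] at *
        all_goals grind

/-- A node-to-node path of `H0` which runs from a neighbour of `Q` to a neighbour of `Q'` and has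
no other vertex equal or adjacent to `Q` or `Q'`. -/
structure IsConnector {ν β : Type} {adj : ν → β → Prop} (Q Q' : β) {u v : ν}
    (π : (bipGraph adj).Walk (Sum.inl u) (Sum.inl v)) : Prop where
  isPath : π.IsPath
  adj_start : adj u Q
  adj_end : adj v Q'
  start_unique : ∀ w, Sum.inl w ∈ π.support → adj w Q → w = u
  end_unique : ∀ w, Sum.inl w ∈ π.support → adj w Q' → w = v
  notMem : Sum.inr Q ∉ π.support ∧ Sum.inr Q' ∉ π.support

/-- If the only possible common neighbour of `Q` and `Q'` is `b = b'`, then all but one of the paths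
can be routed along the lanes over a connector, and the last one along a given walk `R`. -/
theorem IsTransversalLift.exists_paths_of_connector {ν0 β0 βT : Type} {k : ℕ}
    {adj0 : ν0 → β0 → Prop} {adjH : ν0 × Fin k → β0 × βT → Prop}
    (hT : IsTransversalLift adj0 adjH) (hk : 2 ≤ k) {Q Q' : β0}
    (hQQ : Q ≠ Q') {V V' : βT} {N N' : Finset ν0} (hN : ∀ p, p ∈ N ↔ adj0 p Q)
    (hN' : ∀ p, p ∈ N' ↔ adj0 p Q') {X Y : ν0 → Fin k} (hX : ∀ p ∈ N, adjH (p, X p) (Q, V))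
    (hY : ∀ p ∈ N', adjH (p, Y p) (Q', V')) (hc : N.card = N'.card) {u v b b' : ν0}
    {π : (bipGraph adj0).Walk (Sum.inl u) (Sum.inl v)} (hπ : IsConnector Q Q' π) (huv : u ≠ v)
    (hbN : b ∈ N) (hbN' : b' ∈ N') (hbu : b ≠ u) (hbv : b' ≠ v)
    (hC : ∀ p ∈ N, p ∈ N' → p = b ∧ p = b') {L : ℕ} (hπL : π.length ≤ L)
    (R : (bipGraph adjH).Walk (Sum.inl (b, X b)) (Sum.inl (b', Y b'))) (hRL : R.length ≤ L)
    (hR : ∀ z ∈ R.support, projVertex z ∉ π.support ∧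
      projVertex z ≠ Sum.inr Q ∧ projVertex z ≠ Sum.inr Q')
    (hRN : ∀ p ∈ N, ∀ l, Sum.inl (p, l) ∈ R.support → p = b)
    (hRN' : ∀ p ∈ N', ∀ l, Sum.inl (p, l) ∈ R.support → p = b')
    {Δ : ℕ} (hΔ : N.card = Δ) :
    ∃ P : Fin Δ → (bipGraph adjH).Walk (Sum.inr (Q, V)) (Sum.inr (Q', V')),
      (∀ i, (P i).IsPath ∧ (P i).length ≤ L + 6) ∧ PairwiseInternallyDisjoint P := by
  classical
  have : Nonempty ν0 := ⟨b⟩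
  have : Nonempty (Fin k) := ⟨X b⟩
  have hcard := hT.card_le hk V hN
  have huN := (hN u).2 hπ.adj_start
  have hvN' := (hN' v).2 hπ.adj_end
  have h1 := Finset.card_erase_of_mem hbN
  have h1' := Finset.card_erase_of_mem hbN'
  have h2 := Finset.card_erase_of_mem (Finset.mem_erase.2 ⟨hbu.symm, huN⟩)
  have h2' := Finset.card_erase_of_mem (Finset.mem_erase.2 ⟨hbv.symm, hvN'⟩)
  have hcompl : ∀ x : Fin k, ((N.erase b).erase u).card ≤ ({x}ᶜ : Finset (Fin k)).card := by
    intro x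
    rw [Finset.card_compl, Fintype.card_fin, Finset.card_singleton]
    omega
  obtain ⟨σ, hσ, hσi⟩ := Finset.exists_mapsTo_injOn (s := (N.erase b).erase u)
    (t := (N'.erase b').erase v) (by omega)
  obtain ⟨f, hf, hfi⟩ := Finset.exists_mapsTo_injOn (hcompl (X u))
  obtain ⟨g, hg, hgi⟩ := Finset.exists_mapsTo_injOn (hcompl (Y v))
  simp only [Finset.mem_erase, Finset.mem_compl, Finset.mem_singleton] at hσ hf hg
  simp only [Set.InjOn, Finset.mem_coe, Finset.mem_erase] at hσi hfi hgi
  obtain ⟨F, hF⟩ : ∃ F : ν0 → Fin k, F = fun p => if p = u then X u else f p := ⟨_, rfl⟩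
  obtain ⟨G, hG⟩ : ∃ G : ν0 → Fin k, G = fun p => if p = u then Y v else g p := ⟨_, rfl⟩
  have hFi : Set.InjOn F (N.erase b : Finset ν0) := by
    intro p hp r hr
    simp only [Finset.mem_coe, Finset.mem_erase] at hp hr
    grind
  have hGi : Set.InjOn G (N.erase b : Finset ν0) := by
    intro p hp r hr
    simp only [Finset.mem_coe, Finset.mem_erase] at hp hr
    grind
  obtain ⟨M, hML, hMp, hMd, hMu, hMv⟩ := hT.exists_lanes hFi hGi π hπ.isPath huv
  simp only [Finset.mem_coe, Finset.mem_erase] at hMd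
  obtain ⟨τ, hτ⟩ : ∃ τ : ν0 → ν0, τ = fun p => if p = b then b' else if p = u then v else σ p :=
    ⟨_, rfl⟩
  have hτN : ∀ p ∈ N, τ p ∈ N' := by grind
  have hτi : ∀ p ∈ N, ∀ r ∈ N, τ p = τ r → p = r := by grind
  obtain ⟨S, hSb, hSM⟩ : ∃ S : ν0 → Set ((ν0 × Fin k) ⊕ (β0 × βT)),
      (∀ z, z ∈ S b ↔ z ∈ R.support) ∧ ∀ p, p ≠ b → ∀ z, z ∈ S p ↔ z ∈ (M p).support :=
    ⟨fun p => if p = b then {z | z ∈ R.support} else {z | z ∈ (M p).support},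
      by simp, fun p hp => by simp [hp]⟩
  refine hT.exists_paths hQQ hN hN' hX hY hτN (fun p hp r hr => hτi p hp r hr) S (L := L)
    ?_ ?_ ?_ ?_ ?_ ?_ hΔ
  · intro p hp
    by_cases hpb : p = b
    · subst hpb
      exact ⟨_, _, R, hRL, .inl rfl, .inl (by simp [hτ]), fun z hz => (hSb z).2 hz⟩
    · refine ⟨_, _, M p, (hML p).trans hπL, ?_, ?_, fun z hz => (hSM p hpb z).2 hz⟩
      · unfold OneHop
        grind
      · unfold OneHop
        grind
  · intro p hp r hr z hz hz'
    by_cases hpb : p = b <;> by_cases hrb : r = b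
    · rw [hpb, hrb]
    · rw [hpb, hSb] at hz
      rw [hSM r hrb] at hz'
      exact absurd (hMp r z hz') (hR z hz).1
    · rw [hrb, hSb] at hz'
      rw [hSM p hpb] at hz
      exact absurd (hMp p z hz) (hR z hz').1
    · exact hMd p ⟨hpb, hp⟩ r ⟨hrb, hr⟩ z ((hSM p hpb z).1 hz) ((hSM r hrb z).1 hz')
  · intro p hp r hr hz
    by_cases hrb : r = b
    · rw [hrb, hSb] at hz
      rw [hrb, hRN p hp _ hz]
    · rw [hSM r hrb] at hz
      obtain rfl := hπ.start_unique p (hMp r _ hz) ((hN p).1 hp)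
      have := hMu r _ hz
      grind
  · intro p hp r hr hz
    by_cases hrb : r = b
    · rw [hrb, hSb] at hz
      have := hRN' _ (hτN p hp) _ hz
      grind
    · rw [hSM r hrb] at hz
      have hv : τ p = v := hπ.end_unique _ (hMp r _ hz) ((hN' _).1 (hτN p hp))
      rw [hv] at hz
      have := hMv r _ hz
      grind
  · intro p hp r hr hpr _
    have := hC p hp (hpr ▸ hτN r hr)
    grind
  · intro p hp B
    by_cases hpb : p = b
    · rw [hpb, hSb, hSb]
      exact ⟨fun h => (hR _ h).2.1 rfl, fun h => (hR _ h).2.2 rfl⟩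
    · rw [hSM p hpb, hSM p hpb]
      exact ⟨fun h => hπ.notMem.1 (hMp p _ h), fun h => hπ.notMem.2 (hMp p _ h)⟩

/-- If `b` is the only common neighbour of `Q` and `Q'`, and the two blocks of `H` meet the group
of `b` in different nodes, then all but two of the paths can be routed along the lanes over a
connector avoiding `b`, and the other two through the group of `b`. -/
theorem IsTransversalLift.exists_paths_of_connector_of_ne {ν0 β0 βT : Type} {k : ℕ}
    {adj0 : ν0 → β0 → Prop} {adjH : ν0 × Fin k → β0 × βT → Prop}
    (hT : IsTransversalLift adj0 adjH) (hk : 2 ≤ k) {Q Q' : β0}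
    (hQQ : Q ≠ Q') {V V' : βT} {N N' : Finset ν0} (hN : ∀ p, p ∈ N ↔ adj0 p Q)
    (hN' : ∀ p, p ∈ N' ↔ adj0 p Q') {X Y : ν0 → Fin k} (hX : ∀ p ∈ N, adjH (p, X p) (Q, V))
    (hY : ∀ p ∈ N', adjH (p, Y p) (Q', V')) (hc : N.card = N'.card) {u v b : ν0}
    {π : (bipGraph adj0).Walk (Sum.inl u) (Sum.inl v)} (hπ : IsConnector Q Q' π) (huv : u ≠ v)
    (hbN : b ∈ N) (hbN' : b ∈ N') (hbπ : Sum.inl b ∉ π.support) (hXYb : X b ≠ Y b)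
    (hC : ∀ p ∈ N, p ∈ N' → p = b) {L : ℕ} (hπL : π.length ≤ L)
    {Δ : ℕ} (hΔ : N.card = Δ) :
    ∃ P : Fin Δ → (bipGraph adjH).Walk (Sum.inr (Q, V)) (Sum.inr (Q', V')),
      (∀ i, (P i).IsPath ∧ (P i).length ≤ L + 6) ∧ PairwiseInternallyDisjoint P := by
  classical
  have : Nonempty ν0 := ⟨b⟩
  have : Nonempty (Fin k) := ⟨X b⟩
  have hcard := hT.card_le hk V hN
  have huN := (hN u).2 hπ.adj_start
  have hvN' := (hN' v).2 hπ.adj_end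
  have hbu : b ≠ u := fun h => hbπ (h ▸ π.start_mem_support)
  have hbv : b ≠ v := fun h => hbπ (h ▸ π.end_mem_support)
  have h1 := Finset.card_erase_of_mem hbN
  have h1' := Finset.card_erase_of_mem hbN'
  have h2 := Finset.card_erase_of_mem (Finset.mem_erase.2 ⟨hbu.symm, huN⟩)
  have h2' := Finset.card_erase_of_mem (Finset.mem_erase.2 ⟨hbv.symm, hvN'⟩)
  have hcompl : ∀ x : Fin k, ((N.erase b).erase u).card ≤ ({x}ᶜ : Finset (Fin k)).card := by
    intro x
    rw [Finset.card_compl, Fintype.card_fin, Finset.card_singleton]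
    omega
  obtain ⟨σ, hσ, hσi⟩ := Finset.exists_mapsTo_injOn (s := (N.erase b).erase u)
    (t := (N'.erase b).erase v) (by omega)
  obtain ⟨F, hF, hFi⟩ := Finset.exists_mapsTo_injOn (hcompl (X u))
  obtain ⟨G, hG, hGi⟩ := Finset.exists_mapsTo_injOn (hcompl (Y v))
  simp only [Finset.mem_erase, Finset.mem_compl, Finset.mem_singleton] at hσ hF hG
  simp only [Set.InjOn, Finset.mem_coe, Finset.mem_erase] at hσi
  obtain ⟨M, hML, hMp, hMd, hMu, hMv⟩ := hT.exists_lanes hFi hGi π hπ.isPath huv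
  simp only [Finset.mem_coe, Finset.mem_erase] at hMd
  have hbM : ∀ p l, Sum.inl (b, l) ∉ (M p).support := fun p l h => hbπ (hMp p _ h)
  obtain ⟨τ, hτ⟩ : ∃ τ : ν0 → ν0, τ = fun p => if p = b then v else if p = u then b else σ p :=
    ⟨_, rfl⟩
  have hτN : ∀ p ∈ N, τ p ∈ N' := by grind
  have hτi : ∀ p ∈ N, ∀ r ∈ N, τ p = τ r → p = r := by grind
  obtain ⟨S, hSb, hSu, hSM⟩ : ∃ S : ν0 → Set ((ν0 × Fin k) ⊕ (β0 × βT)),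
      S b = {Sum.inl (b, X b)} ∧ S u = {Sum.inl (b, Y b)} ∧
      ∀ p, p ≠ b → p ≠ u → S p = {z | z ∈ (M p).support} :=
    ⟨fun p => if p = b then {Sum.inl (b, X b)} else if p = u then {Sum.inl (b, Y b)} else
      {z | z ∈ (M p).support}, by simp, by simp [hbu.symm], fun p hp hp' => by simp [hp, hp']⟩
  refine hT.exists_paths hQQ hN hN' hX hY hτN (fun p hp r hr => hτi p hp r hr) S (L := L)
    ?_ ?_ ?_ ?_ ?_ ?_ hΔ
  · intro p hp
    by_cases hpb : p = b
    · subst hpb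
      refine ⟨_, _, .nil' (Sum.inl (p, X p)), by simp, .inl rfl, .inr ?_, by simp [hSb]⟩
      grind
    by_cases hpu : p = u
    · subst hpu
      refine ⟨_, _, .nil' (Sum.inl (b, Y b)), by simp, .inr ?_, .inl ?_, by simp [hSu]⟩ <;> grind
    · refine ⟨_, _, M p, (hML p).trans hπL, ?_, ?_, by simp [hSM p hpb hpu]⟩
      · unfold OneHop
        grind
      · unfold OneHop
        grind
  · intro p hp r hr z hz hz'
    by_cases hpb : p = b <;> by_cases hrb : r = b <;> by_cases hpu : p = u <;>
      by_cases hru : r = u <;> grind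
  · intro p hp r hr hz
    by_cases hrb : r = b
    · simp only [hrb, hSb, Set.mem_singleton_iff, Sum.inl.injEq, Prod.mk.injEq] at hz
      rw [hrb, hz.1]
    by_cases hru : r = u
    · simp only [hru, hSu, Set.mem_singleton_iff, Sum.inl.injEq, Prod.mk.injEq] at hz
      exact absurd (hz.1 ▸ hz.2) hXYb
    · rw [hSM r hrb hru] at hz
      obtain rfl := hπ.start_unique p (hMp r _ hz) ((hN p).1 hp)
      have := hMu r _ hz
      grind
  · intro p hp r hr hz
    by_cases hrb : r = b
    · simp only [hrb, hSb, Set.mem_singleton_iff, Sum.inl.injEq, Prod.mk.injEq] at hz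
      exact absurd (hz.1 ▸ hz.2).symm hXYb
    by_cases hru : r = u
    · simp only [hru, hSu, Set.mem_singleton_iff, Sum.inl.injEq, Prod.mk.injEq] at hz
      grind
    · rw [hSM r hrb hru] at hz
      have hv : τ p = v := hπ.end_unique _ (hMp r _ hz) ((hN' _).1 (hτN p hp))
      rw [hv] at hz
      have := hMv r _ hz
      grind
  · intro p hp r hr hpr hXY
    obtain rfl := hC p hp (hpr ▸ hτN r hr)
    exact absurd hXY hXYb
  · intro p hp B
    by_cases hpb : p = b
    · simp [hpb, hSb]
    by_cases hpu : p = u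
    · simp [hpu, hSu]
    · rw [hSM p hpb hpu]
      exact ⟨fun h => hπ.notMem.1 (hMp p _ h), fun h => hπ.notMem.2 (hMp p _ h)⟩

/-- Let `k, Δ, d ≥ 2` and let `H` (given by `adjH`) be built by the
2-step method from the connected `(d,Δ)`-bipartite graph `H0` using the
`[Δ,k]`-transversal design `T`.  Let `Q` and `Q'` be distinct blocks of `H0` joined
by `lam ≥ 2` pairwise internally-disjoint paths, each of length at most `μ`.  Then
for any blocks `(Q, V) ∈ B_Q` and `(Q', V') ∈ B_{Q'}` of `H` there are `Δ` pairwise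
internally-disjoint paths in `H` from `(Q, V)` to `(Q', V')`, each of length at
most `μ + 4`. -/
theorem twoStep_one_to_one_full {ν0 β0 νT βT : Type} (d Δ k lam μ : ℕ)
    (hd : 2 ≤ d) (hΔ : 2 ≤ Δ) (hk : 2 ≤ k)
    (adj0 : ν0 → β0 → Prop) (groupT : νT → Fin Δ) (adjT : νT → βT → Prop)
    (adjH : ν0 × Fin k → β0 × βT → Prop)
    (hH0 : IsBipartiteDegRank d Δ adj0)
    (hconn : (bipGraph adj0).Connected)
    (h2 : TwoStep Δ k adj0 groupT adjT adjH)
    (Q Q' : β0) (hQQ : Q ≠ Q') (hlam : 2 ≤ lam)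
    (q : Fin lam → (bipGraph adj0).Walk (Sum.inr Q) (Sum.inr Q'))
    (hq : ∀ i : Fin lam, (q i).IsPath ∧ (q i).length ≤ μ)
    (hqd : PairwiseInternallyDisjoint q)
    (V V' : βT) :
    ∃ p : Fin Δ → (bipGraph adjH).Walk (Sum.inr (Q, V)) (Sum.inr (Q', V')),
      (∀ i, (p i).IsPath ∧ (p i).length ≤ μ + 4) ∧
      PairwiseInternallyDisjoint p := by
  classical
  have hT := h2.isTransversalLift
  have hfin : ∀ P : β0, ∃ N : Finset ν0, (∀ p, p ∈ N ↔ adj0 p P) ∧ N.card = Δ := by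
    intro P
    have hP := hH0.2 P
    have : Finite {x : ν0 // adj0 x P} := Nat.finite_of_card_ne_zero (by omega)
    have : Fintype {x : ν0 // adj0 x P} := Fintype.ofFinite _
    refine ⟨Finset.univ.map (Function.Embedding.subtype fun x => adj0 x P), by simp, ?_⟩
    rw [Finset.card_map, Finset.card_univ, ← Nat.card_eq_fintype_card, hP]
  obtain ⟨N, hN, hNc⟩ := hfin Q
  obtain ⟨N', hN', hNc'⟩ := hfin Q'
  have : Nonempty (Fin k) := ⟨⟨0, by omega⟩⟩
  have hXe : ∀ p ∈ N, ∃ j, adjH (p, j) (Q, V) := fun p hp => hT.exists_label V ((hN p).1 hp)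
  have hYe : ∀ p ∈ N', ∃ j, adjH (p, j) (Q', V') := fun p hp => hT.exists_label V' ((hN' p).1 hp)
  choose! X hX using hXe
  choose! Y hY using hYe
  have hcard := hT.card_le hk V hN
  have hcon : ∀ i, ∃ (u v : ν0) (π : (bipGraph adj0).Walk (Sum.inl u) (Sum.inl v)),
      IsConnector Q Q' π ∧ π.length + 2 ≤ μ ∧ ∀ z ∈ π.support, z ∈ (q i).support ∧
        z ≠ Sum.inr Q ∧ z ≠ Sum.inr Q' := by
    intro i
    obtain ⟨u, v, π, hp, hl, hu, hv, hs, hsu, hsv⟩ :=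
      exists_induced_node_path hQQ (q i) (hq i).1
    exact ⟨u, v, π, ⟨hp, hu, hv, hsu, hsv, fun h => (hs _ h).2.1 rfl, fun h => (hs _ h).2.2 rfl⟩,
      hl.trans (hq i).2, hs⟩
  choose u v π hπ hπl hπs using hcon
  let i0 : Fin lam := ⟨0, by omega⟩
  let i1 : Fin lam := ⟨1, by omega⟩
  have hdis : ∀ z ∈ (π i0).support, z ∉ (π i1).support := by
    intro z hz hz'
    have := hqd.2 i0 i1 z (fun _ => (hπs i0 z hz).2) (hπs i0 z hz).1 (hπs i1 z hz').1
    simp [i0, i1] at this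
  have hμ := hπl i0
  by_cases h2C : ∃ a b, a ≠ b ∧ a ∈ N ∧ a ∈ N' ∧ b ∈ N ∧ b ∈ N' ∧ (X b = Y b → X a = Y a)
  · obtain ⟨a, b, hab, haN, haN', hbN, hbN', himp⟩ := h2C
    obtain ⟨τ, m, hτ, hτi, hmi, hmX, hmY, hXY, hop⟩ := exists_midpoints hk (hNc.trans hNc'.symm)
      hcard haN haN' hbN hbN' hab himp
    obtain ⟨P, hP, hPd⟩ := hT.exists_paths hQQ hN hN' hX hY hτ hτi
      (fun p => {Sum.inl (m p)}) (L := 0)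
      (fun p hp => ⟨_, _, .nil' (Sum.inl (m p)), by simp, (hop p hp).1, (hop p hp).2, by simp⟩)
      (by
        rintro p hp r hr z rfl hz
        exact hmi hp hr (Sum.inl.inj hz))
      (fun p hp r hr h => hmX p hp r hr (Sum.inl.inj h).symm)
      (fun p hp r hr h => hmY p hp r hr (Sum.inl.inj h).symm) hXY (by simp) hNc
    exact ⟨P, fun i => ⟨(hP i).1, (hP i).2.trans (by omega)⟩, hPd⟩
  have hC : ∀ a ∈ N, a ∈ N' → ∀ b ∈ N, b ∈ N' → a = b := by
    intro a haN haN' b hbN hbN'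
    by_contra hab
    by_cases himp : X b = Y b → X a = Y a
    · exact h2C ⟨a, b, hab, haN, haN', hbN, hbN', himp⟩
    · exact h2C ⟨b, a, Ne.symm hab, hbN, hbN', haN, haN', fun _ => by tauto⟩
  suffices ∃ P : Fin Δ → (bipGraph adjH).Walk (Sum.inr (Q, V)) (Sum.inr (Q', V')),
      (∀ i, (P i).IsPath ∧ (P i).length ≤ (μ - 2) + 6) ∧ PairwiseInternallyDisjoint P by
    rwa [show μ - 2 + 6 = μ + 4 by omega] at this
  have hu : ∀ i, u i ∈ N := fun i => (hN _).2 (hπ i).adj_start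
  have hv : ∀ i, v i ∈ N' := fun i => (hN' _).2 (hπ i).adj_end
  have hlen : ∀ i, (π i).length ≤ μ - 2 := fun i => Nat.le_sub_of_add_le (hπl i)
  by_cases h1C : ∃ b, b ∈ N ∧ b ∈ N'
  · obtain ⟨b, hbN, hbN'⟩ := h1C
    obtain ⟨i, hbi⟩ : ∃ i, Sum.inl b ∉ (π i).support := by
      by_cases hb : Sum.inl b ∈ (π i0).support
      · exact ⟨i1, hdis _ hb⟩
      · exact ⟨i0, hb⟩
    have hbu : b ≠ u i := fun h => hbi (h ▸ (π i).start_mem_support)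
    have hbv : b ≠ v i := fun h => hbi (h ▸ (π i).end_mem_support)
    have huv : u i ≠ v i := fun h => hbu (hC b hbN hbN' (u i) (hu i) (h ▸ hv i))
    by_cases hXY : X b = Y b
    · have hsup : ∀ z, z ∈ ((SimpleGraph.Walk.nil.copy rfl (by rw [hXY]) :
          (bipGraph adjH).Walk (Sum.inl (b, X b)) (Sum.inl (b, Y b)))).support →
          z = Sum.inl (b, X b) := by
        intro z hz
        rw [SimpleGraph.Walk.support_copy] at hz
        simpa using hz
      refine hT.exists_paths_of_connector hk hQQ hN hN' hX hY (hNc.trans hNc'.symm) (hπ i) huv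
        hbN hbN' hbu hbv (fun p hp hp' => ⟨hC p hp hp' b hbN hbN', hC p hp hp' b hbN hbN'⟩)
        (hlen i) (SimpleGraph.Walk.nil.copy rfl (by rw [hXY])) (by simp) ?_ ?_ ?_ hNc
      · intro z hz
        rw [hsup z hz]
        simpa [projVertex] using hbi
      · intro p _ l hz
        exact (Prod.mk.inj (Sum.inl.inj (hsup _ hz))).1
      · intro p _ l hz
        exact (Prod.mk.inj (Sum.inl.inj (hsup _ hz))).1
    · exact hT.exists_paths_of_connector_of_ne hk hQQ hN hN' hX hY (hNc.trans hNc'.symm) (hπ i) huv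
        hbN hbN' hbi hXY (fun p hp hp' => hC p hp hp' b hbN hbN') (hlen i) hNc
  · have huv : ∀ i, u i ≠ v i := fun i h => h1C ⟨u i, hu i, h ▸ hv i⟩
    obtain ⟨M, hML, hMp, -, hMu, hMv⟩ := hT.exists_lanes (ι := Unit) (s := Set.univ)
      (f := fun _ => X (u i1)) (g := fun _ => Y (v i1)) (Set.injOn_of_injective
        (Function.injective_of_subsingleton _)) (Set.injOn_of_injective
        (Function.injective_of_subsingleton _)) (π i1) (hπ i1).isPath (huv i1)
    refine hT.exists_paths_of_connector hk hQQ hN hN' hX hY (hNc.trans hNc'.symm) (hπ i0) (huv i0)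
      (hu i1) (hv i1) ?_ ?_ (fun p hp hp' => absurd ⟨p, hp, hp'⟩ h1C) (hlen i0) (M ())
      ((hML ()).trans (hlen i1)) ?_ ?_ ?_ hNc
    · intro h
      exact hdis _ (π i0).start_mem_support (h ▸ (π i1).start_mem_support)
    · intro h
      exact hdis _ (π i0).end_mem_support (h ▸ (π i1).end_mem_support)
    · intro z hz
      have hz' := hMp () z hz
      exact ⟨fun h => hdis _ h hz', (hπs i1 _ hz').2⟩
    · intro p hp l hz
      exact (hπ i1).start_unique p (hMp () _ hz) ((hN p).1 hp)
    · intro p hp l hz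
      exact (hπ i1).end_unique p (hMp () _ hz) ((hN' p).1 hp)
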